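/- arXiv:0906.2716 — 2 statements merged into one kernel-verified Lean document; each statement's English description precedes it below -/
import Mathlib

section
/- Let n ≥ 1 and u₁, …, u_n be positive integers with convergents p_k, q_k. The path coded by the pattern word E_n starting at (0,0) ends at the point (q_n, p_n); every point (x, y) visited by this path satisfies 0 ≤ p_n·x − q_n·y ≤ p_n + q_n − 1; and a visited point (x,y) satisfies p_n·x − q_n·y = 0 if and only if (x,y) = (0,0) or (x,y) = (q_n, p_n). (In other words, the pattern of characteristics (p_n, q_n) is a digital straight segment lying in the standard line D(p_n, q_n, 0), whose only upper leaning points are its two endpoints.) -/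
/-!
The words `E k` are lower Christoffel words, built by the classical pairing argument.

Write `cross v w = w.2 * v.1 - w.1 * v.2`, which is positive when `w` is steeper than `v`. Call a
word with displacement `v` *Christoffel* if each of its prefixes, with displacement `P`, satisfies
`0 ≤ cross P v < v.1 + v.2`, and `cross P v = 0` only for the empty and the full prefix. Call
`(A, B)` a *Christoffel pair* if both words are Christoffel and their displacements `a`, `b` satisfy
`cross a b = 1`. The key fact (`IsChristoffel.append`) is that `A ++ B` is then Christoffel too:

* lower bound: a prefix point of `A` lies in the first quadrant, weakly below the line of `a`, hence
  below the line of `a + b`, which is steeper; prefixes ending inside `B` are treated in the same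
  way from the other end of the path;
* upper bound: `cross P v < v.1 + v.2` says that the point `P + (-1, 1)` lies strictly above the
  line of `v`. As `(a, b)` is a basis of `ℤ²`, that point is `α a + β b` with integers `α`, `β`; if
  it were not above the line of `a + b`, then `α ≥ β`, and it would be too far from the origin to
  come from a prefix of `A` (similarly for `B`).

Thus `(A ++ B, B)` and `(A, A ++ B)` are Christoffel pairs again. Starting from the pair
`([false], [true])`, the words `E (2i)`, `E (2i+1)` form a Christoffel pair for every `i`.
-/

/-- `m`-fold concatenation of the word `w`. -/
def wpow (w : List Bool) (m : ℕ) : List Bool := (List.replicate m w).flatten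

/-- The pattern words `E k` over the alphabet `{0,1}` (`false` = 0, `true` = 1):
`E 0 = 0`, `E 1 = 0^{u 1} 1`, `E (2i+1) = E (2i)^{u (2i+1)} · E (2i-1)` and
`E (2i) = E (2i-2) · E (2i-1)^{u (2i)}`. -/
def patt (u : ℕ → ℕ) : ℕ → List Bool
  | 0 => [false]
  | 1 => List.replicate (u 1) false ++ [true]
  | (k+2) =>
    if (k+2) % 2 = 1 then wpow (patt u (k+1)) (u (k+2)) ++ patt u k
    else patt u k ++ wpow (patt u (k+1)) (u (k+2))

/-- Continued-fraction numerators. -/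
def cfP (u : ℕ → ℕ) : ℕ → ℤ
  | 0 => 0
  | 1 => 1
  | (k+2) => (u (k+2) : ℤ) * cfP u (k+1) + cfP u k

/-- Continued-fraction denominators. -/
def cfQ (u : ℕ → ℕ) : ℕ → ℤ
  | 0 => 1
  | 1 => (u 1 : ℤ)
  | (k+2) => (u (k+2) : ℤ) * cfQ u (k+1) + cfQ u k

/-- The step coded by a letter: `0` codes `(1,0)` and `1` codes `(0,1)`. -/
def step (b : Bool) : ℤ × ℤ := if b then (0, 1) else (1, 0)

/-- The point of the path coded by `w` (from the origin) reached after `k` steps. -/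
def pathPt (w : List Bool) (k : ℕ) : ℤ × ℤ := ((w.take k).map step).sum

/-- Displacement of the path coded by `w`. -/
def wordVec (w : List Bool) : ℤ × ℤ := (w.map step).sum

/-- The determinant of `v` and `w`. -/
def cross (v w : ℤ × ℤ) : ℤ := w.2 * v.1 - w.1 * v.2

/-- Lower Christoffel words: all prefix points lie in the standard line of the displacement of `w`
through the origin, and only the two endpoints are on its upper boundary. -/
def IsChristoffel (w : List Bool) : Prop :=
  ∀ s t, w = s ++ t → 0 ≤ cross (wordVec s) (wordVec w) ∧
    cross (wordVec s) (wordVec w) < (wordVec w).1 + (wordVec w).2 ∧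
    (cross (wordVec s) (wordVec w) = 0 → s = [] ∨ t = [])

/-- Two Christoffel words whose displacements form a positively oriented basis of `ℤ²`. -/
structure IsChristoffelPair (A B : List Bool) : Prop where
  left : IsChristoffel A
  right : IsChristoffel B
  det : cross (wordVec A) (wordVec B) = 1

@[simp] lemma wordVec_nil : wordVec [] = 0 := rfl

@[simp] lemma wordVec_append (s t : List Bool) : wordVec (s ++ t) = wordVec s + wordVec t := by
  simp [wordVec]

lemma wordVec_cons (b : Bool) (t : List Bool) : wordVec (b :: t) = step b + wordVec t := by
  simp [wordVec]

lemma wordVec_nonneg (w : List Bool) : 0 ≤ (wordVec w).1 ∧ 0 ≤ (wordVec w).2 := by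
  induction w with
  | nil => simp
  | cons b t ih => cases b <;> simp [wordVec_cons, step] <;> omega

lemma eq_nil_of_wordVec {w : List Bool} (h1 : (wordVec w).1 = 0) (h2 : (wordVec w).2 = 0) :
    w = [] := by
  cases w with
  | nil => rfl
  | cons b t =>
    have := wordVec_nonneg t
    cases b <;> simp [wordVec_cons, step] at h1 h2 <;> omega

/-- The bounds for a prefix of the first word of a pair, with `(x, y)` the prefix point and
`(z, w)` the rest of that word. -/
lemma bounds_left {ax ay bx bY x y z w : ℤ} (hbx : 0 ≤ bx)
    (hx : 0 ≤ x) (hy : 0 ≤ y) (hz : 0 ≤ z) (hw : 0 ≤ w)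
    (hax : ax = x + z) (hay : ay = y + w) (det : bY * ax - bx * ay = 1)
    (h0 : 0 ≤ ay * x - ax * y) (h1 : ay * x - ax * y < ax + ay) :
    0 ≤ (ay + bY) * x - (ax + bx) * y ∧
    (ay + bY) * x - (ax + bx) * y < (ax + bx) + (ay + bY) ∧
    ((ay + bY) * x - (ax + bx) * y = 0 → x = 0 ∧ y = 0) := by
  have ha0 : 0 ≤ ax := by omega
  have ha1 : 0 ≤ ay := by omega
  have hapos : 0 < ax := by
    rcases ha0.lt_or_eq with h | h
    · exact h
    · rw [← h] at det; nlinarith [mul_nonneg hbx ha1]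
  -- The prefix point is also below the line of `b`.
  have key : (bY * x - bx * y) * ax = (ay * x - ax * y) * bx + x := by
    linear_combination x * det
  have hb : 0 ≤ bY * x - bx * y := by
    have : 0 ≤ (bY * x - bx * y) * ax := by rw [key]; positivity
    exact nonneg_of_mul_nonneg_left this hapos
  refine ⟨by linarith, ?_, ?_⟩
  · by_contra hcon
    push Not at hcon
    -- `(x - 1, y + 1) = α • a + β • b` with `α ≥ β ≥ 1`, so `x - 1 ≥ ax`.
    have e : x - 1 = (bY * (x - 1) - bx * (y + 1)) * ax + (ax * (y + 1) - ay * (x - 1)) * bx := by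
      linear_combination (-(x - 1)) * det
    have hβ : 1 ≤ ax * (y + 1) - ay * (x - 1) := by linarith
    have hα : 1 ≤ bY * (x - 1) - bx * (y + 1) := by linarith
    nlinarith [mul_nonneg (sub_nonneg.2 hα) ha0, mul_nonneg (zero_le_one.trans hβ) hbx]
  · intro h
    have hb' : bY * x - bx * y = 0 := by linarith
    have ha' : ay * x - ax * y = 0 := by linarith
    rw [hb', ha'] at key
    have hx0 : x = 0 := by linarith
    subst hx0
    have : ax * y = 0 := by linarith
    rcases mul_eq_zero.1 this with h | h <;> omega

/-- The bounds for a prefix ending inside the second word of a pair, with `(x, y)` the prefix point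
relative to the start of that word and `(z, w)` the rest of it. -/
lemma bounds_right {ax ay bx bY x y z w : ℤ} (hay : 0 ≤ ay)
    (hx : 0 ≤ x) (hy : 0 ≤ y) (hz : 0 ≤ z) (hw : 0 ≤ w)
    (hbx : bx = x + z) (hby : bY = y + w) (det : bY * ax - bx * ay = 1)
    (h0 : 0 ≤ bY * x - bx * y) (h1 : bY * x - bx * y < bx + bY) :
    0 ≤ (ay + bY) * (ax + x) - (ax + bx) * (ay + y) ∧
    (ay + bY) * (ax + x) - (ax + bx) * (ay + y) < (ax + bx) + (ay + bY) ∧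
    ((ay + bY) * (ax + x) - (ax + bx) * (ay + y) = 0 → z = 0 ∧ w = 0) := by
  have hb0 : 0 ≤ bx := by omega
  have hb1 : 0 ≤ bY := by omega
  have hbpos : 0 < bY := by
    rcases hb1.lt_or_eq with h | h
    · exact h
    · rw [← h] at det; nlinarith [mul_nonneg hb0 hay]
  have ez : z = bx - x := by omega
  have ew : w = bY - y := by omega
  -- Seen from the end of the path, the remainder `(z, w)` is steeper than `a`.
  have key : (ax * w - ay * z) * bY = (bY * x - bx * y) * ay + w := by
    rw [ez, ew]; linear_combination (bY - y) * det
  have ha : 0 ≤ ax * w - ay * z := by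
    have : 0 ≤ (ax * w - ay * z) * bY := by rw [key]; positivity
    exact nonneg_of_mul_nonneg_left this hbpos
  have tot : (ay + bY) * (ax + x) - (ax + bx) * (ay + y)
      = (bY * x - bx * y) + (ax * w - ay * z) := by
    rw [ez, ew]; ring
  refine ⟨by linarith, ?_, ?_⟩
  · by_contra hcon
    push Not at hcon
    -- `(x - 1, y + 1) = α • a + β • b` with `α ≤ -1` and `β ≤ α + 1`, so `y + 1 ≤ 0`.
    have e : y + 1 = (bY * (x - 1) - bx * (y + 1)) * ay + (ax * (y + 1) - ay * (x - 1)) * bY := by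
      linear_combination (-(y + 1)) * det
    have hα : bY * (x - 1) - bx * (y + 1) ≤ -1 := by linarith
    have hβ : ax * (y + 1) - ay * (x - 1) ≤ 0 := by linarith
    nlinarith [mul_nonneg (show 0 ≤ -(bY * (x - 1) - bx * (y + 1)) by linarith) hay,
      mul_nonneg (neg_nonneg.2 hβ) hb1]
  · intro h
    have ha' : ax * w - ay * z = 0 := by linarith
    have hb' : bY * x - bx * y = 0 := by linarith
    rw [ha', hb'] at key
    have hw0 : w = 0 := by linarith
    have : bY * z = 0 := by
      have e : bY * x - bx * y = bx * w - bY * z := by rw [ez, ew]; ring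
      rw [hw0] at e; linarith
    rcases mul_eq_zero.1 this with h | h <;> omega

lemma IsChristoffel.append {A B : List Bool} (h : IsChristoffelPair A B) :
    IsChristoffel (A ++ B) := by
  obtain ⟨hA, hB, det⟩ := h
  have nA := wordVec_nonneg A
  have nB := wordVec_nonneg B
  intro s t hst
  have ns := wordVec_nonneg s
  have nt := wordVec_nonneg t
  rcases List.append_eq_append_iff.1 hst with ⟨r, rfl, rfl⟩ | ⟨r, rfl, rfl⟩
  · have nr := wordVec_nonneg r
    obtain ⟨h0, h1, -⟩ := hB r t rfl
    obtain ⟨k0, k1, k2⟩ := bounds_right nA.2 nr.1 nr.2 nt.1 nt.2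
      (by simp) (by simp) det h0 h1
    simp only [cross, wordVec_append A, Prod.fst_add (wordVec A), Prod.snd_add (wordVec A)]
    exact ⟨k0, k1, fun e => Or.inr (eq_nil_of_wordVec (k2 e).1 (k2 e).2)⟩
  · have nr := wordVec_nonneg r
    obtain ⟨h0, h1, -⟩ := hA s r rfl
    obtain ⟨k0, k1, k2⟩ := bounds_left nB.1 ns.1 ns.2 nr.1 nr.2
      (by simp) (by simp) det h0 h1
    simp only [cross, wordVec_append _ B, Prod.fst_add _ (wordVec B), Prod.snd_add _ (wordVec B)]
    exact ⟨k0, k1, fun e => Or.inl (eq_nil_of_wordVec (k2 e).1 (k2 e).2)⟩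

lemma IsChristoffelPair.append_left {A B : List Bool} (h : IsChristoffelPair A B) :
    IsChristoffelPair (A ++ B) B :=
  ⟨.append h, h.right, by
    have := h.det
    simp only [cross, wordVec_append, Prod.fst_add, Prod.snd_add] at this ⊢
    linarith⟩

lemma IsChristoffelPair.append_right {A B : List Bool} (h : IsChristoffelPair A B) :
    IsChristoffelPair A (A ++ B) :=
  ⟨h.left, .append h, by
    have := h.det
    simp only [cross, wordVec_append, Prod.fst_add, Prod.snd_add] at this ⊢
    linarith⟩

lemma wpow_zero (w : List Bool) : wpow w 0 = [] := rfl

lemma wpow_succ (w : List Bool) (m : ℕ) : wpow w (m + 1) = w ++ wpow w m := by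
  simp [wpow, List.replicate_succ]

lemma wpow_succ' (w : List Bool) (m : ℕ) : wpow w (m + 1) = wpow w m ++ w := by
  simp [wpow, List.replicate_succ']

lemma IsChristoffelPair.pow_append_right {A B : List Bool} (h : IsChristoffelPair A B) (m : ℕ) :
    IsChristoffelPair A (wpow A m ++ B) := by
  induction m with
  | zero => exact h
  | succ m ih => rw [wpow_succ, List.append_assoc]; exact ih.append_right

lemma IsChristoffelPair.append_pow_left {A B : List Bool} (h : IsChristoffelPair A B) (m : ℕ) :
    IsChristoffelPair (A ++ wpow B m) B := by
  induction m with
  | zero => simpa [wpow_zero] using h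
  | succ m ih => rw [wpow_succ', ← List.append_assoc]; exact ih.append_left

lemma isChristoffel_singleton (b : Bool) : IsChristoffel [b] := by
  intro s t h
  rcases List.append_eq_cons_iff.1 h.symm with ⟨rfl, rfl⟩ | ⟨r, rfl, h'⟩
  · cases b <;> simp [cross, wordVec, step]
  · obtain ⟨rfl, rfl⟩ := List.append_eq_nil_iff.1 h'.symm
    cases b <;> simp [cross, wordVec, step]

lemma wpow_singleton (b : Bool) (m : ℕ) : wpow [b] m = List.replicate m b := by
  induction m with
  | zero => rfl
  | succ m ih => rw [wpow_succ, ih]; rfl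

lemma isChristoffelPair_patt (u : ℕ → ℕ) (i : ℕ) :
    IsChristoffelPair (patt u (2 * i)) (patt u (2 * i + 1)) := by
  induction i with
  | zero =>
    have h : IsChristoffelPair [false] [true] :=
      ⟨isChristoffel_singleton _, isChristoffel_singleton _, by simp [cross, wordVec, step]⟩
    simpa [patt, wpow_singleton] using h.pow_append_right (u 1)
  | succ i ih =>
    have e : patt u (2 * i + 2) = patt u (2 * i) ++ wpow (patt u (2 * i + 1)) (u (2 * i + 2)) := by
      rw [patt, if_neg (by omega)]
    have o : patt u (2 * i + 1 + 2)
        = wpow (patt u (2 * i + 2)) (u (2 * i + 3)) ++ patt u (2 * i + 1) := by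
      rw [patt, if_pos (by omega)]
    have h := ih.append_pow_left (u (2 * i + 2))
    rw [← e] at h
    have h' := h.pow_append_right (u (2 * i + 3))
    rw [← o] at h'
    exact h'

lemma isChristoffel_patt (u : ℕ → ℕ) (n : ℕ) : IsChristoffel (patt u n) := by
  rcases Nat.even_or_odd' n with ⟨i, rfl | rfl⟩
  · exact (isChristoffelPair_patt u i).left
  · exact (isChristoffelPair_patt u i).right

lemma wordVec_wpow (w : List Bool) (m : ℕ) : wordVec (wpow w m) = (m : ℤ) • wordVec w := by
  induction m with
  | zero => simp [wpow_zero]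
  | succ m ih => rw [wpow_succ', wordVec_append, ih]; push_cast; rw [add_smul, one_smul]

lemma wordVec_patt (u : ℕ → ℕ) (n : ℕ) : wordVec (patt u n) = (cfQ u n, cfP u n) := by
  induction n using Nat.twoStepInduction with
  | zero => simp [patt, cfQ, cfP, wordVec, step]
  | one => simp [patt, cfQ, cfP, wordVec, step]
  | more n ih1 ih2 =>
    rw [patt, cfQ, cfP]
    split_ifs <;> simp [wordVec_wpow, ih1, ih2, add_comm]



/-- The pattern of characteristics `(p n, q n)` is a DSS of the standard line
`D(p n, q n, 0)` joining `(0,0)` to `(q n, p n)`, whose only upper leaning points are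
its two endpoints. -/
theorem pattern_is_dss
    (n : ℕ) (hn : 1 ≤ n) (u : ℕ → ℕ)
    (hu : ∀ k, 1 ≤ k → k ≤ n → 0 < u k) :
    pathPt (patt u n) (patt u n).length = (cfQ u n, cfP u n) ∧
    (∀ k ≤ (patt u n).length,
      0 ≤ cfP u n * (pathPt (patt u n) k).1 - cfQ u n * (pathPt (patt u n) k).2 ∧
      cfP u n * (pathPt (patt u n) k).1 - cfQ u n * (pathPt (patt u n) k).2 ≤
        cfP u n + cfQ u n - 1) ∧
    (∀ k ≤ (patt u n).length,
      (cfP u n * (pathPt (patt u n) k).1 - cfQ u n * (pathPt (patt u n) k).2 = 0 ↔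
        pathPt (patt u n) k = (0, 0) ∨ pathPt (patt u n) k = (cfQ u n, cfP u n))) := by
  have hv := wordVec_patt u n
  have hend : pathPt (patt u n) (patt u n).length = (cfQ u n, cfP u n) := by
    simpa [pathPt, wordVec] using hv
  have H : ∀ k, 0 ≤ cfP u n * (pathPt (patt u n) k).1 - cfQ u n * (pathPt (patt u n) k).2 ∧
      cfP u n * (pathPt (patt u n) k).1 - cfQ u n * (pathPt (patt u n) k).2 < cfQ u n + cfP u n ∧
      (cfP u n * (pathPt (patt u n) k).1 - cfQ u n * (pathPt (patt u n) k).2 = 0 →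
        (patt u n).take k = [] ∨ (patt u n).drop k = []) := by
    intro k
    have h := isChristoffel_patt u n _ _ (List.take_append_drop k (patt u n)).symm
    rw [hv] at h
    exact h
  refine ⟨hend, fun k _ => ⟨(H k).1, by linarith [(H k).2.1]⟩, fun k _ => ⟨fun h0 => ?_, ?_⟩⟩
  · rcases (H k).2.2 h0 with h | h
    · left; rw [pathPt, h]; rfl
    · right
      rw [← hend, pathPt, pathPt, List.take_length, List.take_of_length_le (by simpa using h)]
  · rintro (h | h) <;> rw [h]
    · simp
    · ring
end

section
/- Let n ≥ 1, u₁, …, u_n be positive integers with convergents p_k, q_k, and let f ≥ 1. The path coded by the f-fold concatenation E_n^f starting at (0,0) lies entirely in the standard line D(p_n, q_n, 0) (i.e., every visited point (x,y) satisfies 0 ≤ p_n·x − q_n·y < p_n + q_n), and its upper leaning points (visited points with p_n·x − q_n·y = 0) are exactly the f + 1 points k·(q_n, p_n) for 0 ≤ k ≤ f. Consequently any factor of E_n^f codes a digital straight segment of slope p_n/q_n. -/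
/-! ### Letter counts and prefixes -/

/-- The number of letters `0` of `w`: the abscissa reached by the path coded by `w`. -/
def wX (w : List Bool) : ℤ := (w.count false : ℤ)

/-- The number of letters `1` of `w`: the ordinate reached by the path coded by `w`. -/
def wY (w : List Bool) : ℤ := (w.count true : ℤ)

lemma wX_append (v w : List Bool) : wX (v ++ w) = wX v + wX w := by simp [wX]

lemma wY_append (v w : List Bool) : wY (v ++ w) = wY v + wY w := by simp [wY]

lemma wX_nonneg (w : List Bool) : 0 ≤ wX w := by simp [wX]

lemma wY_nonneg (w : List Bool) : 0 ≤ wY w := by simp [wY]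

lemma wX_le_of_prefix {s w : List Bool} (h : s <+: w) : wX s ≤ wX w := by
  have := h.sublist.count_le false
  simpa [wX] using this

lemma wY_le_of_prefix {s w : List Bool} (h : s <+: w) : wY s ≤ wY w := by
  have := h.sublist.count_le true
  simpa [wY] using this

lemma wpow_add (w : List Bool) (k m : ℕ) : wpow w (k + m) = wpow w k ++ wpow w m := by
  rw [wpow, List.replicate_add, List.flatten_append, wpow, wpow]

lemma wX_wpow (w : List Bool) (m : ℕ) : wX (wpow w m) = m * wX w := by
  induction m with
  | zero => simp [wpow_zero, wX]
  | succ m ih => rw [wpow_succ, wX_append, ih]; push_cast; ring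

lemma wY_wpow (w : List Bool) (m : ℕ) : wY (wpow w m) = m * wY w := by
  induction m with
  | zero => simp [wpow_zero, wY]
  | succ m ih => rw [wpow_succ, wY_append, ih]; push_cast; ring

lemma sum_map_step (w : List Bool) : (w.map step).sum = (wX w, wY w) := by
  induction w with
  | nil => rfl
  | cons b w ih =>
    rw [List.map_cons, List.sum_cons, ih]
    cases b <;> simp [wX, wY, step, add_comm]

lemma pathPt_eq (w : List Bool) (j : ℕ) : pathPt w j = (wX (w.take j), wY (w.take j)) :=
  sum_map_step _

lemma prefix_append_cases {s v w : List Bool} (h : s <+: v ++ w) :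
    s <+: v ∨ ∃ t, s = v ++ t ∧ t <+: w := by
  rcases le_total s.length v.length with hl | hl
  · exact Or.inl (List.prefix_of_prefix_length_le h (List.prefix_append v w) hl)
  · obtain ⟨t, rfl⟩ := List.prefix_of_prefix_length_le (List.prefix_append v w) h hl
    exact Or.inr ⟨t, rfl, (List.prefix_append_right_inj v).1 h⟩

/-! ### Christoffel words and standard pairs -/

/-- Christoffel words: the path of `w` lies in the standard line `D(Y w, X w, 0)`. -/
def IsChr (w : List Bool) : Prop :=
  ∀ s, s <+: w → 0 ≤ wY w * wX s - wX w * wY s ∧ wY w * wX s - wX w * wY s < wY w + wX w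

/-- Standard pairs: two Christoffel words whose vectors form a direct basis of `ℤ²`; the second
word is the steeper one. -/
structure StdPair (v w : List Bool) : Prop where
  left : IsChr v
  right : IsChr w
  det : wY w * wX v - wY v * wX w = 1

/-- With `(b₁, a₁)` and `(b₂, a₂)` the vectors of `v` and `w`, the form of `vw` is the sum of the
forms of `v` and `w`. On a prefix of one of the two words the form of that word is bounded by
hypothesis; the other form is bounded by multiplying it by a coordinate or by the coordinate sum,
and eliminating with the determinant condition. -/
lemma StdPair.isChr_append {v w : List Bool} (h : StdPair v w) : IsChr (v ++ w) := by
  obtain ⟨hv, hw, hd⟩ := h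
  have a1 := wY_nonneg v
  have b1 := wX_nonneg v
  have a2 := wY_nonneg w
  have b2 := wX_nonneg w
  have b1pos : 0 < wX v := by
    rcases b1.lt_or_eq with h | h
    · exact h
    · rw [← h] at hd; nlinarith [mul_nonneg a1 b2]
  have a2pos : 0 < wY w := by
    rcases a2.lt_or_eq with h | h
    · exact h
    · rw [← h] at hd; nlinarith [mul_nonneg a1 b2]
  intro s hs
  rw [wX_append, wY_append]
  rcases prefix_append_cases hs with h | ⟨t, rfl, h⟩
  · obtain ⟨h0, h1⟩ := hv s h
    have hx := wX_le_of_prefix h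
    have hy := wY_le_of_prefix h
    have hx0 := wX_nonneg s
    have hy0 := wY_nonneg s
    generalize wX v = b₁ at *
    generalize wY v = a₁ at *
    generalize wX w = b₂ at *
    generalize wY w = a₂ at *
    generalize wX s = x at *
    generalize wY s = y at *
    have e1 : b₁ * (a₂ * x - b₂ * y) = b₂ * (a₁ * x - b₁ * y) + x := by
      linear_combination x * hd
    have e2 : (a₁ + b₁) * (a₂ * x - b₂ * y) = (a₂ + b₂) * (a₁ * x - b₁ * y) + (x + y) := by
      linear_combination (x + y) * hd
    have z0 : 0 ≤ a₂ * x - b₂ * y := by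
      refine nonneg_of_mul_nonneg_right ?_ b1pos
      rw [e1]
      have := mul_nonneg b2 h0
      linarith
    have z1 : a₂ * x - b₂ * y < a₂ + b₂ + 1 := by
      refine lt_of_mul_lt_mul_left (a := a₁ + b₁) ?_ (by linarith)
      rw [e2]
      have : (a₂ + b₂) * (a₁ * x - b₁ * y) ≤ (a₂ + b₂) * (a₁ + b₁ - 1) :=
        mul_le_mul_of_nonneg_left (by linarith) (by linarith)
      linarith
    constructor <;> linarith
  · obtain ⟨h0, h1⟩ := hw t h
    have hx := wX_le_of_prefix h
    have hy := wY_le_of_prefix h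
    have hx0 := wX_nonneg t
    have hy0 := wY_nonneg t
    rw [wX_append, wY_append]
    generalize wX v = b₁ at *
    generalize wY v = a₁ at *
    generalize wX w = b₂ at *
    generalize wY w = a₂ at *
    generalize wX t = x at *
    generalize wY t = y at *
    have e1 : a₂ * (a₁ * x - b₁ * y) = a₁ * (a₂ * x - b₂ * y) - y := by
      linear_combination (-y) * hd
    have e2 : (a₂ + b₂) * (a₁ * x - b₁ * y) = (a₁ + b₁) * (a₂ * x - b₂ * y) - (x + y) := by
      linear_combination (-(x + y)) * hd
    have z0 : -1 ≤ a₁ * x - b₁ * y := by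
      refine le_of_mul_le_mul_left (a := a₂) ?_ a2pos
      rw [e1]
      have := mul_nonneg a1 h0
      linarith
    have z1 : a₁ * x - b₁ * y < a₁ + b₁ := by
      refine lt_of_mul_lt_mul_left (a := a₂ + b₂) ?_ (by linarith)
      rw [e2]
      have : (a₁ + b₁) * (a₂ * x - b₂ * y) ≤ (a₁ + b₁) * (a₂ + b₂ - 1) :=
        mul_le_mul_of_nonneg_left (by linarith) (by linarith)
      linarith
    constructor <;> linarith

lemma StdPair.append_right {v w : List Bool} (h : StdPair v w) : StdPair v (v ++ w) :=
  ⟨h.left, h.isChr_append, by rw [wX_append, wY_append]; linarith [h.det]⟩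

lemma StdPair.append_left {v w : List Bool} (h : StdPair v w) : StdPair (v ++ w) w :=
  ⟨h.isChr_append, h.right, by rw [wX_append, wY_append]; linarith [h.det]⟩

lemma StdPair.wpow_right {v w : List Bool} (h : StdPair v w) (m : ℕ) :
    StdPair v (wpow v m ++ w) := by
  induction m with
  | zero => simpa [wpow_zero] using h
  | succ m ih => rw [wpow_succ, List.append_assoc]; exact ih.append_right

lemma StdPair.wpow_left {v w : List Bool} (h : StdPair v w) (m : ℕ) :
    StdPair (v ++ wpow w m) w := by
  induction m generalizing v with
  | zero => simpa [wpow_zero] using h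
  | succ m ih => rw [wpow_succ, ← List.append_assoc]; exact ih h.append_left

lemma isChr_singleton (b : Bool) : IsChr [b] := by
  intro s hs
  rcases prefix_append_cases (v := []) hs with h | ⟨t, rfl, h⟩
  · rw [List.prefix_nil.1 h]; cases b <;> simp [wX, wY]
  · rcases List.prefix_cons_iff.1 h with rfl | ⟨t', rfl, h'⟩
    · cases b <;> simp [wX, wY]
    · rw [List.prefix_nil.1 h']; cases b <;> simp [wX, wY]

lemma stdPair_base : StdPair [false] [true] :=
  ⟨isChr_singleton _, isChr_singleton _, by simp [wX, wY]⟩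

/-! ### Pattern words -/

/-- Consecutive pattern words form a standard pair, the one of even index being the flatter. -/
lemma stdPair_patt (u : ℕ → ℕ) (k : ℕ) :
    (k % 2 = 0 → StdPair (patt u k) (patt u (k + 1))) ∧
      (k % 2 = 1 → StdPair (patt u (k + 1)) (patt u k)) := by
  induction k with
  | zero =>
    refine ⟨fun _ => ?_, fun h => by simp at h⟩
    simpa [patt, wpow] using stdPair_base.wpow_right (u 1)
  | succ k ih =>
    refine ⟨fun h => ?_, fun h => ?_⟩
    · have hk : (k + 2) % 2 = 1 := by omega
      rw [show patt u (k + 1 + 1) = _ from patt.eq_3 u k, if_pos hk]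
      exact (ih.2 (by omega)).wpow_right _
    · have hk : ¬ (k + 2) % 2 = 1 := by omega
      rw [show patt u (k + 1 + 1) = _ from patt.eq_3 u k, if_neg hk]
      exact (ih.1 (by omega)).wpow_left _

lemma wXY_patt (u : ℕ → ℕ) (k : ℕ) :
    (wX (patt u k) = cfQ u k ∧ wY (patt u k) = cfP u k) ∧
      (wX (patt u (k + 1)) = cfQ u (k + 1) ∧ wY (patt u (k + 1)) = cfP u (k + 1)) := by
  induction k with
  | zero => simp [patt, cfQ, cfP, wX, wY, List.count_replicate]
  | succ k ih =>
    obtain ⟨⟨h1, h2⟩, h3, h4⟩ := ih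
    refine ⟨⟨h3, h4⟩, ?_⟩
    rw [show patt u (k + 1 + 1) = _ from patt.eq_3 u k, show cfQ u (k + 1 + 1) = _ from cfQ.eq_3 u k,
      show cfP u (k + 1 + 1) = _ from cfP.eq_3 u k]
    split_ifs <;> constructor <;>
      simp only [wX_append, wY_append, wX_wpow, wY_wpow, h1, h2, h3, h4] <;> ring

lemma isChr_patt (u : ℕ → ℕ) (k : ℕ) : IsChr (patt u k) := by
  rcases Nat.mod_two_eq_zero_or_one k with h | h
  · exact ((stdPair_patt u k).1 h).left
  · exact ((stdPair_patt u k).2 h).right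

/-- A Bézout relation for `(q k, p k)`, given by the next pattern word. -/
lemma exists_bezout (u : ℕ → ℕ) (k : ℕ) :
    ∃ c d : ℤ, wY (patt u k) * c - wX (patt u k) * d = 1 := by
  rcases Nat.mod_two_eq_zero_or_one k with h | h
  · exact ⟨-wX (patt u (k + 1)), -wY (patt u (k + 1)),
      by linarith [((stdPair_patt u k).1 h).det]⟩
  · exact ⟨wX (patt u (k + 1)), wY (patt u (k + 1)),
      by linarith [((stdPair_patt u k).2 h).det]⟩

/-! ### Powers of Christoffel words -/

lemma IsChr.wpow_bounds {w : List Bool} (hw : IsChr w) (f : ℕ) :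
    ∀ s, s <+: wpow w f →
      0 ≤ wY w * wX s - wX w * wY s ∧ wY w * wX s - wX w * wY s < wY w + wX w := by
  induction f with
  | zero =>
    intro s hs
    rw [wpow_zero, List.prefix_nil] at hs
    subst hs
    exact hw [] List.nil_prefix
  | succ f ih =>
    intro s hs
    rw [wpow_succ] at hs
    rcases prefix_append_cases hs with h | ⟨t, rfl, h⟩
    · exact hw s h
    · obtain ⟨h0, h1⟩ := ih t h
      rw [wX_append, wY_append]
      constructor <;> linarith

/-- A prefix of `w ^ f` on which the form of `w` vanishes ends at a multiple `m • (X w, Y w)` with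
`0 ≤ m ≤ f`, provided that `(X w, Y w)` is primitive. -/
lemma exists_multiple {w s : List Bool} {f : ℕ} (hb : ∃ c d : ℤ, wY w * c - wX w * d = 1)
    (hs : s <+: wpow w f) (h : wY w * wX s - wX w * wY s = 0) :
    ∃ k : ℕ, k ≤ f ∧ wX s = k * wX w ∧ wY s = k * wY w := by
  obtain ⟨c, d, hb⟩ := hb
  have hx := wX_le_of_prefix hs
  have hy := wY_le_of_prefix hs
  rw [wX_wpow] at hx
  rw [wY_wpow] at hy
  have hx0 := wX_nonneg s
  have hy0 := wY_nonneg s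
  have hX := wX_nonneg w
  have hY := wY_nonneg w
  have hpos : 0 < wY w + wX w := by
    by_contra hn
    have e1 : wX w = 0 := by linarith
    have e2 : wY w = 0 := by linarith
    rw [e1, e2] at hb
    simp at hb
  obtain ⟨m, hm⟩ : ∃ m, m = c * wY s - d * wX s := ⟨_, rfl⟩
  have ex : wX s = m * wX w := by
    rw [hm]; linear_combination (-wX s) * hb + c * h
  have ey : wY s = m * wY w := by
    rw [hm]; linear_combination (-wY s) * hb + d * h
  have m0 : 0 ≤ m := by
    refine nonneg_of_mul_nonneg_left (b := wY w + wX w) ?_ hpos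
    linarith
  have m1 : m ≤ f := by
    refine le_of_mul_le_mul_right (a := wY w + wX w) ?_ hpos
    linarith
  lift m to ℕ using m0
  exact ⟨m, by exact_mod_cast m1, ex, ey⟩

/-- The path coded by `f` repetitions of the pattern `E n` lies in the standard line
`D(p n, q n, 0)`, its upper leaning points are exactly the `f+1` points
`k • (q n, p n)`, `0 ≤ k ≤ f`; consequently any factor of `(E n)^f` codes a digital
straight segment of slope `p n / q n`. -/
theorem pattern_power_dss
    (n : ℕ) (hn : 1 ≤ n) (u : ℕ → ℕ)
    (hu : ∀ k, 1 ≤ k → k ≤ n → 0 < u k)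
    (f : ℕ) (hf : 1 ≤ f) :
    (∀ j ≤ (wpow (patt u n) f).length,
      0 ≤ cfP u n * (pathPt (wpow (patt u n) f) j).1 -
            cfQ u n * (pathPt (wpow (patt u n) f) j).2 ∧
      cfP u n * (pathPt (wpow (patt u n) f) j).1 -
          cfQ u n * (pathPt (wpow (patt u n) f) j).2 < cfP u n + cfQ u n) ∧
    {P : ℤ × ℤ | ∃ j ≤ (wpow (patt u n) f).length,
        pathPt (wpow (patt u n) f) j = P ∧ cfP u n * P.1 - cfQ u n * P.2 = 0} =
      {P : ℤ × ℤ | ∃ k : ℕ, k ≤ f ∧ P = ((k : ℤ) * cfQ u n, (k : ℤ) * cfP u n)} ∧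
    (∀ A B C : List Bool, wpow (patt u n) f = A ++ B ++ C →
      ∃ μ : ℤ, ∀ j ≤ B.length,
        μ ≤ cfP u n * (pathPt B j).1 - cfQ u n * (pathPt B j).2 ∧
        cfP u n * (pathPt B j).1 - cfQ u n * (pathPt B j).2 < μ + cfP u n + cfQ u n) := by
  have hb := (isChr_patt u n).wpow_bounds f
  have hbez := exists_bezout u n
  obtain ⟨⟨hq, hp⟩, -⟩ := wXY_patt u n
  rw [← hq, ← hp]
  simp only [pathPt_eq]
  generalize patt u n = w at *
  refine ⟨fun j _ => hb _ (List.take_prefix _ _), ?_, fun A B C hABC => ?_⟩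
  · ext P
    constructor
    · rintro ⟨j, -, rfl, h⟩
      obtain ⟨k, hk, ex, ey⟩ := exists_multiple hbez (List.take_prefix j _) h
      exact ⟨k, hk, by rw [ex, ey]⟩
    · rintro ⟨k, hk, rfl⟩
      have hpre : wpow w k <+: wpow w f := by
        rw [← Nat.add_sub_cancel' hk, wpow_add]
        exact List.prefix_append _ _
      refine ⟨(wpow w k).length, hpre.length_le, ?_, by ring⟩
      rw [← List.prefix_iff_eq_take.1 hpre, wX_wpow, wY_wpow]
  · -- Translate the line so that the endpoint of `A` becomes the origin.
    refine ⟨-(wY w * wX A - wX w * wY A), fun j _ => ?_⟩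
    have hpre : A ++ B.take j <+: wpow w f := by
      rw [hABC, List.append_assoc, List.prefix_append_right_inj]
      exact (List.take_prefix j B).trans (List.prefix_append B C)
    obtain ⟨h0, h1⟩ := hb _ hpre
    rw [wX_append, wY_append] at h0 h1
    constructor <;> linarith
end
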